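/- In the octonions O = ℍ × ℍ with Cayley–Dickson multiplication, let i = (i, 0), j = (j, 0), and h = (1/2)·(i + j + k + e), where k = (k, 0) and e = (0, 1). Then the smallest subset of O containing {i, j, h} and closed under multiplication has exactly 240 elements, and every element (q, Q) of this set has norm 1, i.e., N(q) + N(Q) = 1 where N denotes the quaternion norm. (This set is the loop J' of integral Cayley numbers of unit norm; hence J' is generated multiplicatively by the three elements i, j, h.) -/

import Mathlib

open scoped Quaternion

/-- Octonion multiplication on `ℍ × ℍ` via the Cayley–Dickson process:
`(q, Q)·(r, R) = (qr − conj(R)Q, Rq + Q·conj(r))`. -/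
noncomputable def omul (x y : ℍ[ℝ] × ℍ[ℝ]) : ℍ[ℝ] × ℍ[ℝ] :=
  (x.1 * y.1 - star y.2 * x.2, y.2 * x.1 + x.2 * star y.1)

/-- The octonion unit `i = (i, 0)`. -/
noncomputable def oi : ℍ[ℝ] × ℍ[ℝ] := ((⟨0, 1, 0, 0⟩ : ℍ[ℝ]), 0)
/-- The octonion unit `j = (j, 0)`. -/
noncomputable def oj : ℍ[ℝ] × ℍ[ℝ] := ((⟨0, 0, 1, 0⟩ : ℍ[ℝ]), 0)
/-- The octonion unit `k = (k, 0)`. -/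
noncomputable def ok : ℍ[ℝ] × ℍ[ℝ] := ((⟨0, 0, 0, 1⟩ : ℍ[ℝ]), 0)
/-- The octonion unit `e = (0, 1)`. -/
noncomputable def oe : ℍ[ℝ] × ℍ[ℝ] := (0, 1)
/-- The integral Cayley number `h = (1/2)·(i + j + k + e)`. -/
noncomputable def oh : ℍ[ℝ] × ℍ[ℝ] := (1 / 2 : ℝ) • (oi + oj + ok + oe)

/-- The smallest subset of the octonions containing `{i, j, h}` and closed
under multiplication. -/
inductive OGen : ℍ[ℝ] × ℍ[ℝ] → Prop
  | mem_i : OGen oi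
  | mem_j : OGen oj
  | mem_h : OGen oh
  | mul : ∀ x y, OGen x → OGen y → OGen (omul x y)

/-!
Scaled by `2`, the integral Cayley numbers form the lattice `E₈` in `ℤ⁸`. The product of two
lattice vectors is twice a lattice vector, which by bilinearity need only be seen on the 64 products
of simple roots; since the norm is multiplicative, everything generated by `i`, `j`, `h` is a
lattice vector of norm one, that is, a root.

Conversely, the generated set `G` contains `-1 = i * i`, so it is closed under negation, and hence
under conjugation, which reverses products and negates the three generators. The identity
`a (x̄ a) = 2⟨a, x⟩ a - ⟨a, a⟩ x` then shows that `G` is closed under reflections; in particular it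
contains `a + x` whenever `a, x ∈ G` and `2⟨a, x⟩ = -1`. As `G` contains a system of simple roots,
the usual descent on heights yields all roots, and an enumeration finds 240 of them.
-/

/-! ### Simply laced bases -/

section SimplyLacedBase

open QuadraticMap Submodule

variable {ι M : Type*} [AddCommGroup M]

/-- A simply laced base of squared length `m` for a positive definite integral quadratic form:
vectors `α i` with `Q (α i) = m` which pairwise meet at right or obtuse angles and whose polar
values are multiples of `m`. -/
structure IsSimplyLacedBase (Q : QuadraticForm ℤ M) (m : ℤ) (α : ι → M) : Prop where
  pos : 0 < m
  posDef : Q.PosDef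
  apply_eq : ∀ i, Q (α i) = m
  dvd_polar : ∀ i j, m ∣ polar Q (α i) (α j)
  polar_nonpos : ∀ i j, i ≠ j → polar Q (α i) (α j) ≤ 0

namespace IsSimplyLacedBase

variable {Q : QuadraticForm ℤ M} {m : ℤ} {α : ι → M}

theorem dvd_polar_of_mem_span (hα : IsSimplyLacedBase Q m α) {u v : M}
    (hu : u ∈ span ℤ (Set.range α)) (hv : v ∈ span ℤ (Set.range α)) : m ∣ polar Q u v := by
  have hle : map₂ Q.polarBilin (span ℤ (Set.range α)) (span ℤ (Set.range α)) ≤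
      Ideal.span {m} := by
    rw [map₂_span_span, span_le]
    rintro _ ⟨_, ⟨i, rfl⟩, _, ⟨j, rfl⟩, rfl⟩
    exact Ideal.mem_span_singleton.2 (hα.dvd_polar i j)
  exact Ideal.mem_span_singleton.1 (hle (apply_mem_map₂ _ hu hv))

theorem dvd_of_mem_span (hα : IsSimplyLacedBase Q m α) {v : M}
    (hv : v ∈ span ℤ (Set.range α)) : m ∣ Q v := by
  induction hv using span_induction with
  | mem _ hx =>
    obtain ⟨i, rfl⟩ := hx
    rw [hα.apply_eq]
  | zero => simp
  | add x y hx hy ihx ihy =>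
    rw [QuadraticMap.map_add Q]
    exact (ihx.add ihy).add (hα.dvd_polar_of_mem_span hx hy)
  | smul a x _ ih =>
    rw [QuadraticMap.map_smul]
    exact ih.mul_left _

theorem le_of_mem_span (hα : IsSimplyLacedBase Q m α) {v : M}
    (hv : v ∈ span ℤ (Set.range α)) (hv0 : v ≠ 0) : m ≤ Q v :=
  Int.le_of_dvd (hα.posDef v hv0) (hα.dvd_of_mem_span hv)

theorem eq_or_sub_apply_eq (hα : IsSimplyLacedBase Q m α) {v : M}
    (hv : v ∈ span ℤ (Set.range α)) (hQv : Q v = m) {i : ι} (hi : 0 < polar Q v (α i)) :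
    v = α i ∨ Q (v - α i) = m ∧ polar Q (v - α i) (α i) = -m := by
  have hQsub : Q (v - α i) = 2 * m - polar Q v (α i) := by
    rw [sub_eq_add_neg, QuadraticMap.map_add Q, polar_neg_right, QuadraticMap.map_neg, hQv,
      hα.apply_eq]
    ring
  have hmem : v - α i ∈ span ℤ (Set.range α) := sub_mem hv (subset_span ⟨i, rfl⟩)
  refine or_iff_not_imp_left.2 fun hne => ?_
  have hle : m ≤ Q (v - α i) := hα.le_of_mem_span hmem (sub_ne_zero.2 hne)
  have hpolar : m ≤ polar Q v (α i) :=
    Int.le_of_dvd hi (hα.dvd_polar_of_mem_span hv (subset_span ⟨i, rfl⟩))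
  refine ⟨by linarith, ?_⟩
  rw [polar_sub_left, polar_self, hα.apply_eq, two_smul]
  linarith

section Fintype

variable [Fintype ι]

theorem polar_sum_nonpos (hα : IsSimplyLacedBase Q m α) {c d : ι → ℤ}
    (hc : 0 ≤ c) (hd : 0 ≤ d) (hcd : ∀ i, c i * d i = 0) :
    polar Q (∑ i, c i • α i) (∑ j, d j • α j) ≤ 0 := by
  have hexpand : polar Q (∑ i, c i • α i) (∑ j, d j • α j) =
      ∑ j, ∑ i, d j * (c i * polar Q (α i) (α j)) := by
    simp only [← polarBilin_apply_apply, map_sum, LinearMap.sum_apply, map_smul,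
      LinearMap.smul_apply, smul_eq_mul, Finset.mul_sum]
  rw [hexpand]
  refine Finset.sum_nonpos fun j _ => Finset.sum_nonpos fun i _ => ?_
  rw [← mul_assoc, mul_comm (d j)]
  obtain rfl | hij := eq_or_ne i j
  · simp [hcd]
  · exact mul_nonpos_of_nonneg_of_nonpos (mul_nonneg (hc i) (hd j)) (hα.polar_nonpos i j hij)

/-- The positive part `p` and the negative part `n` of `v` satisfy `Q p + Q n ≤ Q v = m`, while
nonzero lattice vectors have `Q`-value at least `m`; so one of the two parts vanishes. -/
theorem exists_nonneg_combination (hα : IsSimplyLacedBase Q m α) {v : M}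
    (hv : v ∈ span ℤ (Set.range α)) (hQv : Q v = m) :
    ∃ c : ι → ℤ, 0 ≤ c ∧ (v = ∑ i, c i • α i ∨ v = -∑ i, c i • α i) := by
  obtain ⟨c, rfl⟩ := (mem_span_range_iff_exists_fun ℤ).1 hv
  set p := ∑ i, c⁺ i • α i with hp
  set n := ∑ i, c⁻ i • α i with hn
  have hsub : ∑ i, c i • α i = p - n := by
    rw [hp, hn, ← Finset.sum_sub_distrib]
    refine Finset.sum_congr rfl fun i _ => ?_
    rw [← sub_smul, ← Pi.sub_apply, posPart_sub_negPart]
  rw [hsub] at hQv ⊢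
  have hdisjoint (i : ι) : c⁺ i * c⁻ i = 0 := by
    rw [Pi.posPart_apply, Pi.negPart_apply]
    obtain hi | hi := le_total 0 (c i)
    · rw [negPart_eq_zero.2 hi, mul_zero]
    · rw [posPart_eq_zero.2 hi, zero_mul]
  have hpolar : polar Q p n ≤ 0 :=
    hα.polar_sum_nonpos (posPart_nonneg c) (negPart_nonneg c) hdisjoint
  have hQ : Q p + Q n ≤ m := by
    rw [sub_eq_add_neg, QuadraticMap.map_add Q, polar_neg_right, QuadraticMap.map_neg] at hQv
    linarith
  by_cases hp0 : p = 0
  · exact ⟨c⁻, negPart_nonneg c, .inr (by rw [hp0, zero_sub])⟩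
  by_cases hn0 : n = 0
  · exact ⟨c⁺, posPart_nonneg c, .inl (by rw [hn0, sub_zero])⟩
  have hmp := hα.le_of_mem_span ((mem_span_range_iff_exists_fun ℤ).2 ⟨c⁺, rfl⟩) hp0
  have hmn := hα.le_of_mem_span ((mem_span_range_iff_exists_fun ℤ).2 ⟨c⁻, rfl⟩) hn0
  linarith [hα.pos]

theorem exists_polar_pos {c : ι → ℤ} (hc : 0 ≤ c) (hQ : 0 < Q (∑ i, c i • α i)) :
    ∃ i, 0 < c i ∧ 0 < polar Q (∑ j, c j • α j) (α i) := by
  have hsum : 0 < ∑ i, c i * polar Q (∑ j, c j • α j) (α i) := by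
    calc 0 < polar Q (∑ j, c j • α j) (∑ i, c i • α i) := by
          rw [polar_self]; positivity
      _ = ∑ i, c i * polar Q (∑ j, c j • α j) (α i) := by
        simp only [← polarBilin_apply_apply, map_sum _ _ Finset.univ, map_smul, smul_eq_mul]
  obtain ⟨i, -, hi⟩ := Finset.exists_lt_of_sum_lt
    (s := Finset.univ) (f := 0) (g := fun i => c i * polar Q (∑ j, c j • α j) (α i))
    (by simpa using hsum)
  have hpolar : 0 < polar Q (∑ j, c j • α j) (α i) := pos_of_mul_pos_right hi (hc i)
  exact ⟨i, pos_of_mul_pos_left hi hpolar.le, hpolar⟩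

/-- Descent on the height `∑ i, c i`: subtracting a base vector that pairs positively with `v`
leaves a shorter vector of the same `Q`-value. -/
theorem nonneg_combination_mem (hα : IsSimplyLacedBase Q m α) {S : Set M}
    (hαS : ∀ i, α i ∈ S) (hadd : ∀ u ∈ S, ∀ v ∈ S, polar Q u v = -m → u + v ∈ S)
    (n : ℕ) (c : ι → ℤ) (hc : 0 ≤ c) (hn : ∑ i, c i = n) (hQ : Q (∑ i, c i • α i) = m) :
    ∑ i, c i • α i ∈ S := by
  classical
  induction n generalizing c with
  | zero =>
    have hc0 : c = 0 := by
      ext i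
      exact (Finset.sum_eq_zero_iff_of_nonneg fun i _ => hc i).1 (by simpa using hn) i
        (Finset.mem_univ i)
    have hm : m = 0 := by simpa [hc0] using hQ.symm
    exact absurd hm hα.pos.ne'
  | succ n ih =>
    obtain ⟨i, hci, hpolar⟩ := exists_polar_pos hc (hQ ▸ hα.pos)
    obtain heq | ⟨hQ', hpolar'⟩ :=
      hα.eq_or_sub_apply_eq ((mem_span_range_iff_exists_fun ℤ).2 ⟨c, rfl⟩) hQ hpolar
    · exact heq ▸ hαS i
    have hsum : ∑ j, (c - Pi.single i 1 : ι → ℤ) j • α j = ∑ j, c j • α j - α i := by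
      simp [sub_smul, Finset.sum_sub_distrib, Pi.single_apply, ite_smul]
    have hc' : 0 ≤ c - Pi.single i 1 := by
      intro j
      obtain rfl | hij := eq_or_ne j i
      · simpa using Order.one_le_iff_pos.2 hci
      · simpa [hij] using hc j
    have hmem := ih (c - Pi.single i 1) hc'
      (by simp [Finset.sum_sub_distrib, hn]) (by rw [hsum, hQ'])
    rw [hsum] at hmem
    simpa using hadd _ hmem _ (hαS i) hpolar'

end Fintype

theorem mem_of_apply_eq [Finite ι] (hα : IsSimplyLacedBase Q m α) {S : Set M}
    (hαS : ∀ i, α i ∈ S) (hneg : ∀ v ∈ S, -v ∈ S)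
    (hadd : ∀ u ∈ S, ∀ v ∈ S, polar Q u v = -m → u + v ∈ S) {v : M}
    (hv : v ∈ span ℤ (Set.range α)) (hQv : Q v = m) : v ∈ S := by
  cases nonempty_fintype ι
  obtain ⟨c, hc, hvc⟩ := hα.exists_nonneg_combination hv hQv
  have hQc : Q (∑ i, c i • α i) = m := by
    obtain rfl | rfl := hvc
    · exact hQv
    · rwa [QuadraticMap.map_neg] at hQv
  have hmem := hα.nonneg_combination_mem hαS hadd (∑ i, c i).toNat c hc
    (Int.toNat_of_nonneg (Finset.sum_nonneg fun i _ => hc i)).symm hQc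
  obtain rfl | rfl := hvc
  · exact hmem
  · exact hneg _ hmem

end IsSimplyLacedBase

end SimplyLacedBase

/-! ### Octonions over a commutative ring -/

/-- Octonions over a commutative ring, encoded as pairs of quaternions. -/
abbrev Octonion (R : Type*) [CommRing R] := ℍ[R] × ℍ[R]

namespace Octonion

open QuadraticMap

section CommRing

variable {R : Type*} [CommRing R]

/-- The Cayley–Dickson product of octonions, bundled as a bilinear map; over `ℝ` it is `omul`. -/
def mul : Octonion R →ₗ[R] Octonion R →ₗ[R] Octonion R :=
  LinearMap.mk₂ R (fun x y => (x.1 * y.1 - star y.2 * x.2, y.2 * x.1 + x.2 * star y.1))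
    (fun x x' y => by
      simp only [Prod.fst_add, Prod.snd_add, Prod.mk_add_mk, Prod.mk.injEq]
      constructor <;> noncomm_ring)
    (fun c x y => by simp [smul_sub])
    (fun x y y' => by
      simp only [Prod.fst_add, Prod.snd_add, Prod.mk_add_mk, star_add, Prod.mk.injEq]
      constructor <;> noncomm_ring)
    (fun c x y => by simp [smul_sub])

theorem mul_apply (x y : Octonion R) :
    mul x y = (x.1 * y.1 - star y.2 * x.2, y.2 * x.1 + x.2 * star y.1) :=
  rfl

/-- Octonion conjugation. -/
def conj (x : Octonion R) : Octonion R := (star x.1, -x.2)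

theorem conj_mul (x y : Octonion R) : conj (mul x y) = mul (conj y) (conj x) := by
  simp [conj, mul_apply]

/-- The quaternion norm `Quaternion.normSq`, bundled as a quadratic form. -/
def quaternionNormSq : QuadraticForm R ℍ[R] :=
  QuadraticMap.ofPolar Quaternion.normSq
    (fun c q => by rw [Quaternion.normSq_smul, pow_two, smul_eq_mul])
    (fun q q' r => by simp only [polar, Quaternion.normSq_add, add_mul, Quaternion.re_add]; ring)
    (fun c q r => by
      simp only [polar, Quaternion.normSq_add, smul_mul_assoc, Quaternion.re_smul, smul_eq_mul]
      ring)

/-- The octonion norm `N q + N Q` of `(q, Q)`, bundled as a quadratic form. -/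
def normSq : QuadraticForm R (Octonion R) := quaternionNormSq.prod quaternionNormSq

theorem normSq_apply (x : Octonion R) :
    normSq x = Quaternion.normSq x.1 + Quaternion.normSq x.2 :=
  rfl

theorem normSq_mul (x y : Octonion R) : normSq (mul x y) = normSq x * normSq y := by
  simp only [mul_apply, normSq_apply, Quaternion.normSq_def', Quaternion.re_sub,
    Quaternion.imI_sub, Quaternion.imJ_sub, Quaternion.imK_sub, Quaternion.re_add,
    Quaternion.imI_add, Quaternion.imJ_add, Quaternion.imK_add, Quaternion.re_mul,
    Quaternion.imI_mul, Quaternion.imJ_mul, Quaternion.imK_mul, Quaternion.re_star,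
    Quaternion.imI_star, Quaternion.imJ_star, Quaternion.imK_star]
  ring

theorem mul_conj_mul (a x : Octonion R) :
    mul a (mul (conj x) a) = polar normSq a x • a - normSq a • x := by
  ext <;> simp [conj, mul_apply, polar, normSq_apply, Quaternion.normSq_def'] <;> ring

end CommRing

section Map

variable {R S : Type*} [CommRing R] [CommRing S]

/-- Coordinatewise application of a ring homomorphism to a quaternion. -/
@[simps]
def quaternionMap (f : R →+* S) (q : ℍ[R]) : ℍ[S] := ⟨f q.re, f q.imI, f q.imJ, f q.imK⟩

/-- Coordinatewise application of a ring homomorphism to an octonion. -/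
def map (f : R →+* S) : Octonion R →+ Octonion S where
  toFun x := (quaternionMap f x.1, quaternionMap f x.2)
  map_zero' := by ext <;> simp
  map_add' x y := by ext <;> simp

theorem map_apply (f : R →+* S) (x : Octonion R) :
    map f x = (quaternionMap f x.1, quaternionMap f x.2) :=
  rfl

theorem map_injective {f : R →+* S} (hf : Function.Injective f) :
    Function.Injective (map f) := by
  intro x y hxy
  simp only [map_apply, Prod.ext_iff, Quaternion.ext_iff, re_quaternionMap, imI_quaternionMap,
    imJ_quaternionMap, imK_quaternionMap, hf.eq_iff] at hxy
  simpa only [Prod.ext_iff, Quaternion.ext_iff] using hxy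

theorem map_mul (f : R →+* S) (x y : Octonion R) : map f (mul x y) = mul (map f x) (map f y) := by
  ext <;> simp [map_apply, mul_apply]

theorem normSq_map (f : R →+* S) (x : Octonion R) : normSq (map f x) = f (normSq x) := by
  simp [map_apply, normSq_apply, Quaternion.normSq_def']

end Map

theorem posDef_normSq {R : Type*} [CommRing R] [LinearOrder R] [IsStrictOrderedRing R] :
    (normSq : QuadraticForm R (Octonion R)).PosDef := by
  have h : (quaternionNormSq : QuadraticForm R ℍ[R]).PosDef := fun q hq =>
    (Quaternion.normSq_nonneg (a := q)).lt_of_ne' (Quaternion.normSq_ne_zero.2 hq)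
  exact h.prod h

/-! ### The doubled lattice of integral Cayley numbers -/

section Lattice

open Submodule

instance {R : Type*} [Zero R] [One R] [Neg R] [DecidableEq R] : DecidableEq ℍ[R] :=
  (Quaternion.equivProd R).decidableEq

/-- The lattice of integral Cayley numbers, scaled by `2` so that its coordinates are integers.
The four conditions are the parity checks of the extended Hamming code. -/
def doubledCayleyIntegers : Submodule ℤ (Octonion ℤ) :=
  AddSubgroup.toIntSubmodule
    { carrier := {v | Even (v.1.imI + v.1.imJ + v.1.imK + v.2.re) ∧
        Even (v.1.re + v.1.imJ + v.1.imK + v.2.imI) ∧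
        Even (v.1.re + v.1.imI + v.1.imK + v.2.imJ) ∧
        Even (v.1.re + v.1.imI + v.1.imJ + v.2.imK)}
      zero_mem' := by simp
      add_mem' := by
        simp only [Set.mem_ofPred_eq, Int.even_iff, Prod.fst_add, Prod.snd_add, Quaternion.re_add,
          Quaternion.imI_add, Quaternion.imJ_add, Quaternion.imK_add]
        omega
      neg_mem' := by
        simp only [Set.mem_ofPred_eq, Int.even_iff, Prod.fst_neg, Prod.snd_neg, Quaternion.re_neg,
          Quaternion.imI_neg, Quaternion.imJ_neg, Quaternion.imK_neg]
        omega }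

instance : DecidablePred (· ∈ doubledCayleyIntegers) := fun v =>
  inferInstanceAs (Decidable (Even (v.1.imI + v.1.imJ + v.1.imK + v.2.re) ∧
    Even (v.1.re + v.1.imJ + v.1.imK + v.2.imI) ∧ Even (v.1.re + v.1.imI + v.1.imK + v.2.imJ) ∧
    Even (v.1.re + v.1.imI + v.1.imJ + v.2.imK)))

/-- Simple roots of the doubled integral Cayley numbers, numbered as in `CartanMatrix.E₈`. They are
chosen so that each is twice a short product of `i`, `j` and `h`. -/
def simpleRoot : Fin 8 → Octonion ℤ :=
  ![(⟨1, -1, 1, 0⟩, ⟨0, 0, 0, 1⟩), (⟨-1, 0, 1, -1⟩, ⟨0, 1, 0, 0⟩),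
    (⟨-1, 1, -1, 0⟩, ⟨0, 0, 0, 1⟩), (⟨1, -1, -1, 0⟩, ⟨0, 0, 0, -1⟩),
    (⟨0, 1, 1, 1⟩, ⟨1, 0, 0, 0⟩), (⟨0, 0, 0, -1⟩, ⟨-1, -1, 1, 0⟩),
    (⟨-1, -1, 0, 1⟩, ⟨0, 0, -1, 0⟩), (⟨1, 1, 0, -1⟩, ⟨0, 0, -1, 0⟩)]

theorem polar_simpleRoot (i j : Fin 8) :
    polar normSq (simpleRoot i) (simpleRoot j) = 4 * CartanMatrix.E₈ i j := by
  revert i j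
  decide +kernel

theorem isSimplyLacedBase_simpleRoot : IsSimplyLacedBase normSq 4 simpleRoot where
  pos := by norm_num
  posDef := posDef_normSq
  apply_eq := by decide +kernel
  dvd_polar i j := polar_simpleRoot i j ▸ dvd_mul_right _ _
  polar_nonpos i j hij := by
    rw [polar_simpleRoot]
    linarith [CartanMatrix.E₈_off_diag_nonpos i j hij]

theorem span_simpleRoot : span ℤ (Set.range simpleRoot) = doubledCayleyIntegers := by
  refine le_antisymm (span_le.2 ?_) fun v ⟨⟨s, hs⟩, ⟨t, ht⟩, ⟨u, hu⟩, ⟨w, hw⟩⟩ => ?_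
  · rintro _ ⟨i, rfl⟩
    exact (by decide : ∀ i, simpleRoot i ∈ doubledCayleyIntegers) i
  obtain ⟨⟨a, b, c, d⟩, ⟨e, f, g, h⟩⟩ := v
  simp only at hs ht hu hw
  refine (mem_span_range_iff_exists_fun ℤ).2 ⟨![-2 * b - c - d + 2 * s - t + w,
    -2 * b - c - 2 * d + 3 * s - t, -3 * b - 2 * c - 2 * d + 4 * s - 2 * t + w,
    a - 4 * b - 2 * c - 3 * d + 6 * s - 3 * t, a - 3 * b - c - 2 * d + 5 * s - 3 * t,
    a - 2 * b - d + 3 * s - 3 * t, a - b + 2 * s - 2 * t - u, a + s - t - u], ?_⟩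
  ext <;> simp [Fin.sum_univ_eight, -zsmul_eq_mul] <;> simp [simpleRoot] <;> linarith

theorem exists_mul_simpleRoot_eq_two_smul (i j : Fin 8) :
    ∃ w ∈ doubledCayleyIntegers, mul (simpleRoot i) (simpleRoot j) = (2 : ℤ) • w := by
  let half (q : ℍ[ℤ]) : ℍ[ℤ] := ⟨q.re / 2, q.imI / 2, q.imJ / 2, q.imK / 2⟩
  have hhalf : ∀ i j,
      Prod.map half half (mul (simpleRoot i) (simpleRoot j)) ∈ doubledCayleyIntegers ∧
      mul (simpleRoot i) (simpleRoot j) =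
        (2 : ℤ) • Prod.map half half (mul (simpleRoot i) (simpleRoot j)) := by
    decide +kernel
  exact ⟨_, hhalf i j⟩

theorem exists_mul_eq_two_smul {u v : Octonion ℤ} (hu : u ∈ doubledCayleyIntegers)
    (hv : v ∈ doubledCayleyIntegers) : ∃ w ∈ doubledCayleyIntegers, mul u v = (2 : ℤ) • w := by
  have hle : map₂ mul doubledCayleyIntegers doubledCayleyIntegers ≤
      doubledCayleyIntegers.map (LinearMap.lsmul ℤ (Octonion ℤ) 2) := by
    nth_rw 1 2 [← span_simpleRoot]
    rw [map₂_span_span, span_le]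
    rintro _ ⟨_, ⟨i, rfl⟩, _, ⟨j, rfl⟩, rfl⟩
    obtain ⟨w, hw, hmul⟩ := exists_mul_simpleRoot_eq_two_smul i j
    exact ⟨w, hw, hmul.symm⟩
  obtain ⟨w, hw, hmul⟩ := hle (apply_mem_map₂ _ hu hv)
  exact ⟨w, hw, hmul.symm⟩

/-- The integral quaternions of norm at most `r ^ 2`. -/
noncomputable def quaternionBall (r : ℕ) : Finset ℍ[ℤ] :=
  ((Finset.Icc (-r : ℤ) r ×ˢ Finset.Icc (-r : ℤ) r ×ˢ Finset.Icc (-r : ℤ) r ×ˢ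
    Finset.Icc (-r : ℤ) r).map (Quaternion.equivProd ℤ).symm.toEmbedding).filter
      (Quaternion.normSq · ≤ (r : ℤ) ^ 2)

theorem mem_quaternionBall {r : ℕ} {q : ℍ[ℤ]} :
    q ∈ quaternionBall r ↔ Quaternion.normSq q ≤ (r : ℤ) ^ 2 := by
  simp only [quaternionBall, Finset.mem_filter, and_iff_right_iff_imp, Finset.mem_map_equiv,
    Equiv.symm_symm, Finset.mem_product, Finset.mem_Icc, ← abs_le]
  rw [Quaternion.normSq_def']
  intro hq
  change |q.re| ≤ r ∧ |q.imI| ≤ r ∧ |q.imJ| ≤ r ∧ |q.imK| ≤ r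
  refine ⟨?_, ?_, ?_, ?_⟩ <;> refine abs_le_of_sq_le_sq ?_ r.cast_nonneg <;>
    linarith [sq_nonneg q.re, sq_nonneg q.imI, sq_nonneg q.imJ, sq_nonneg q.imK]

/-- The doubled integral Cayley numbers of unit norm. -/
noncomputable def doubledCayleyUnits : Finset (Octonion ℤ) :=
  (quaternionBall 2 ×ˢ quaternionBall 2).filter fun v => v ∈ doubledCayleyIntegers ∧ normSq v = 4

theorem mem_doubledCayleyUnits {v : Octonion ℤ} :
    v ∈ doubledCayleyUnits ↔ v ∈ doubledCayleyIntegers ∧ normSq v = 4 := by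
  rw [doubledCayleyUnits, Finset.mem_filter, and_iff_right_iff_imp]
  intro hv
  have hsum : Quaternion.normSq v.1 + Quaternion.normSq v.2 = 4 := hv.2
  rw [Finset.mem_product, mem_quaternionBall, mem_quaternionBall]
  have h₁ : 0 ≤ Quaternion.normSq v.1 := Quaternion.normSq_nonneg
  have h₂ : 0 ≤ Quaternion.normSq v.2 := Quaternion.normSq_nonneg
  exact ⟨by push_cast; linarith, by push_cast; linarith⟩

theorem card_doubledCayleyUnits : doubledCayleyUnits.card = 240 := by
  decide +kernel

end Lattice

/-! ### Halving the lattice -/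

section Halve

variable {u v w : Octonion ℤ}

/-- The embedding of the doubled integral lattice into the real octonions, undoing the scaling
by `2`. -/
noncomputable def halve : Octonion ℤ →+ Octonion ℝ :=
  (DistribSMul.toAddMonoidHom _ (2⁻¹ : ℝ)).comp (map (Int.castRingHom ℝ))

theorem halve_apply (v : Octonion ℤ) : halve v = (2⁻¹ : ℝ) • map (Int.castRingHom ℝ) v :=
  rfl

theorem halve_injective : Function.Injective halve :=
  (smul_right_injective (Octonion ℝ) (inv_ne_zero (two_ne_zero' ℝ))).comp
    (map_injective (f := Int.castRingHom ℝ) Int.cast_injective)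

theorem normSq_halve (v : Octonion ℤ) : normSq (halve v) = normSq v / 4 := by
  rw [halve_apply, QuadraticMap.map_smul, normSq_map, eq_intCast, smul_eq_mul]
  ring

theorem normSq_halve_eq_one : normSq (halve v) = 1 ↔ normSq v = 4 := by
  rw [normSq_halve, div_eq_one_iff_eq four_ne_zero]
  norm_cast

theorem polar_halve (u v : Octonion ℤ) :
    polar normSq (halve u) (halve v) = polar normSq u v / 4 := by
  simp only [polar, ← map_add halve, normSq_halve]
  push_cast
  ring

theorem omul_eq_mul (x y : Octonion ℝ) : omul x y = mul x y :=
  rfl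

theorem omul_halve (h : mul u v = (2 : ℤ) • w) : omul (halve u) (halve v) = halve w := by
  calc omul (halve u) (halve v) = mul (halve u) (halve v) := omul_eq_mul _ _
    _ = (2⁻¹ * 2⁻¹ : ℝ) • map (Int.castRingHom ℝ) (mul u v) := by
      rw [halve_apply, halve_apply, map_smul, LinearMap.map_smul₂, smul_smul, map_mul]
    _ = halve w := by
      rw [h, map_zsmul, halve_apply, ← Int.cast_smul_eq_zsmul ℝ, smul_smul]
      norm_num

theorem oi_eq_halve : oi = halve (⟨0, 2, 0, 0⟩, 0) := by
  ext <;> simp [oi, halve_apply, map_apply] <;> simp [quaternionMap]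

theorem oj_eq_halve : oj = halve (⟨0, 0, 2, 0⟩, 0) := by
  ext <;> simp [oj, halve_apply, map_apply] <;> simp [quaternionMap]

theorem oh_eq_halve : oh = halve (simpleRoot 4) := by
  ext <;> simp [oh, halve_apply, map_apply] <;> simp [oi, oj, ok, oe, simpleRoot]

end Halve

end Octonion

/-! ### The multiplicative closure of `i`, `j`, `h` -/

namespace OGen

open Octonion QuadraticMap

variable {x y : Octonion ℝ}

theorem normSq_eq_one (hx : OGen x) : normSq x = 1 := by
  induction hx with
  | mem_i => exact oi_eq_halve ▸ normSq_halve_eq_one.2 (by decide)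
  | mem_j => exact oj_eq_halve ▸ normSq_halve_eq_one.2 (by decide)
  | mem_h => exact oh_eq_halve ▸ normSq_halve_eq_one.2 (by decide)
  | mul x y _ _ ihx ihy => rw [omul_eq_mul, normSq_mul, ihx, ihy, one_mul]

theorem exists_halve_eq (hx : OGen x) : ∃ v ∈ doubledCayleyIntegers, halve v = x := by
  induction hx with
  | mem_i => exact ⟨_, by decide, oi_eq_halve.symm⟩
  | mem_j => exact ⟨_, by decide, oj_eq_halve.symm⟩
  | mem_h => exact ⟨_, by decide, oh_eq_halve.symm⟩
  | mul _ _ _ _ ihx ihy =>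
    obtain ⟨u, hu, rfl⟩ := ihx
    obtain ⟨v, hv, rfl⟩ := ihy
    obtain ⟨w, hw, hmul⟩ := exists_mul_eq_two_smul hu hv
    exact ⟨w, hw, (omul_halve hmul).symm⟩

theorem neg (hx : OGen x) : OGen (-x) := by
  have h : -x = omul (omul oi oi) x := by ext <;> simp [omul] <;> simp [oi]
  exact h ▸ .mul _ _ (.mul _ _ .mem_i .mem_i) hx

theorem conj (hx : OGen x) : OGen (conj x) := by
  induction hx with
  | mem_i =>
    have h : Octonion.conj oi = -oi := by ext <;> simp [Octonion.conj]; simp [oi]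
    exact h ▸ mem_i.neg
  | mem_j =>
    have h : Octonion.conj oj = -oj := by ext <;> simp [Octonion.conj]; simp [oj]
    exact h ▸ mem_j.neg
  | mem_h =>
    have h : Octonion.conj oh = -oh := by ext <;> simp [Octonion.conj, oh] <;> simp [oi, oj, ok, oe]
    exact h ▸ mem_h.neg
  | mul x y _ _ ihx ihy =>
    rw [omul_eq_mul, Octonion.conj_mul]
    exact ihy.mul _ _ ihx

theorem add_of_polar_eq_neg_one (hx : OGen x) (hy : OGen y) (hpolar : polar normSq x y = -1) :
    OGen (x + y) := by
  have hreflect : x + y = -omul x (omul (Octonion.conj y) x) := by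
    rw [omul_eq_mul, omul_eq_mul, mul_conj_mul, hx.normSq_eq_one, hpolar]
    module
  exact hreflect ▸ (hx.mul _ _ (hy.conj.mul _ _ hx)).neg

theorem halve_of_mul_eq {u v w : Octonion ℤ} (hu : OGen (halve u)) (hv : OGen (halve v))
    (h : Octonion.mul u v = (2 : ℤ) • w) : OGen (halve w) :=
  omul_halve h ▸ hu.mul _ _ hv

theorem halve_simpleRoot (i : Fin 8) : OGen (halve (simpleRoot i)) := by
  have hi : OGen (halve (⟨0, 2, 0, 0⟩, 0)) := oi_eq_halve ▸ mem_i
  have hj : OGen (halve (⟨0, 0, 2, 0⟩, 0)) := oj_eq_halve ▸ mem_j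
  have h₄ : OGen (halve (simpleRoot 4)) := oh_eq_halve ▸ mem_h
  have hij : OGen (halve (⟨0, 0, 0, 2⟩, 0)) := hi.halve_of_mul_eq hj (by decide)
  have hhi : OGen (halve (⟨-1, 0, 1, -1⟩, ⟨0, -1, 0, 0⟩)) := h₄.halve_of_mul_eq hi (by decide)
  have hih : OGen (halve (⟨-1, 0, -1, 1⟩, ⟨0, 1, 0, 0⟩)) := hi.halve_of_mul_eq h₄ (by decide)
  have hji : OGen (halve (⟨0, 0, 0, -2⟩, 0)) := hj.halve_of_mul_eq hi (by decide)
  have h₀ : OGen (halve (simpleRoot 0)) := h₄.halve_of_mul_eq hji (by decide)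
  have h₂ : OGen (halve (simpleRoot 2)) := hhi.halve_of_mul_eq hj (by decide)
  have h₃ : OGen (halve (simpleRoot 3)) := hih.halve_of_mul_eq hj (by decide)
  have h₅ : OGen (halve (simpleRoot 5)) := h₄.halve_of_mul_eq h₂ (by decide)
  have h₆ : OGen (halve (simpleRoot 6)) := h₄.halve_of_mul_eq hj (by decide)
  have h₁ : OGen (halve (simpleRoot 1)) := h₆.halve_of_mul_eq hij (by decide)
  have h₇ : OGen (halve (simpleRoot 7)) := hi.halve_of_mul_eq h₃ (by decide)
  fin_cases i <;> assumption

theorem halve_of_mem {v : Octonion ℤ} (hv : v ∈ doubledCayleyIntegers) (hQv : normSq v = 4) :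
    OGen (halve v) := by
  rw [← span_simpleRoot] at hv
  refine isSimplyLacedBase_simpleRoot.mem_of_apply_eq (S := {v | OGen (halve v)})
    halve_simpleRoot (fun v hv => ?_) (fun u hu v hv huv => ?_) hv hQv
  · rw [Set.mem_ofPred_eq, map_neg]
    exact hv.neg
  · rw [Set.mem_ofPred_eq, map_add]
    refine hu.add_of_polar_eq_neg_one hv ?_
    rw [polar_halve, huv]
    norm_num

theorem iff_mem_image_halve : OGen x ↔ x ∈ halve '' doubledCayleyUnits := by
  simp only [Set.mem_image, Finset.mem_coe, mem_doubledCayleyUnits]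
  constructor
  · intro hx
    obtain ⟨v, hv, rfl⟩ := hx.exists_halve_eq
    exact ⟨v, ⟨hv, normSq_halve_eq_one.1 hx.normSq_eq_one⟩, rfl⟩
  · rintro ⟨v, ⟨hv, hnorm⟩, rfl⟩
    exact halve_of_mem hv hnorm

end OGen

/-- The multiplicative closure of `{i, j, h}` in the octonions has exactly
`240` elements, all of norm `1`: it is the loop `J'` of integral Cayley
numbers of unit norm, generated by the three elements `i, j, h`. -/
theorem integral_cayley_unit_norm_three_generated :
    Nat.card {x : ℍ[ℝ] × ℍ[ℝ] // OGen x} = 240 ∧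
    ∀ x : ℍ[ℝ] × ℍ[ℝ], OGen x →
      Quaternion.normSq x.1 + Quaternion.normSq x.2 = 1 := by
  refine ⟨?_, fun x hx => hx.normSq_eq_one⟩
  calc Nat.card {x // OGen x}
      = (Octonion.halve '' Octonion.doubledCayleyUnits).ncard :=
        Nat.card_congr (Equiv.subtypeEquivRight fun _ => OGen.iff_mem_image_halve)
    _ = Octonion.doubledCayleyUnits.card := by
        rw [Set.ncard_image_of_injective _ Octonion.halve_injective, Set.ncard_coe_finset]
    _ = 240 := Octonion.card_doubledCayleyUnits
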